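/- arXiv:1206.0268 — 2 statements merged into one kernel-verified Lean document; each statement's English description precedes it below -/
import Mathlib

section
/- Let c ∈ (0,1), let (Ψ_δ)_{δ>0} satisfy Assumption A with constant C_Ψ and I_δ = 0 for all δ > 0, and let R₀ be an unperturbed wave. Then there exist constants C_G > 0 and δ* > 0, both independent of δ and S, such that for every 0 < δ < δ* and every δ-admissible S: ‖A G(S)‖_∞ ≤ C_G δ and ‖A² G(S)‖_∞ ≤ C_G (1 + ‖S''‖_∞) δ². -/
open MeasureTheory Real Filter Topology

/-- The averaging operator `(A F)(x) = ∫_{x-1/2}^{x+1/2} F(s) ds`. -/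
noncomputable def Aop (F : ℝ → ℝ) : ℝ → ℝ := fun x => ∫ s in (x - 1/2)..(x + 1/2), F s

/-- The operator `M F = A(A F) - c² F`. -/
noncomputable def Mop (c : ℝ) (F : ℝ → ℝ) : ℝ → ℝ := fun x => Aop (Aop F) x - c ^ 2 * F x

/-- Membership in `W^{2,∞}(ℝ)`. -/
def IsW2inf (S : ℝ → ℝ) : Prop :=
  Differentiable ℝ S ∧ (∃ C : ℝ, ∀ x, |S x| ≤ C ∧ |deriv S x| ≤ C) ∧
    ∃ K : NNReal, LipschitzWith K (deriv S)

/-- Assumption A for the family `(Ψ_δ)_{δ>0}` with constant `C_Ψ`. -/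
def AssumptionA (Ψ : ℝ → ℝ → ℝ) (CΨ : ℝ) : Prop :=
  0 < CΨ ∧ ∀ δ : ℝ, 0 < δ →
    Ψ δ 0 = 0 ∧ ContDiff ℝ 2 (Ψ δ) ∧
    (∀ r : ℝ, δ ≤ |r| → deriv (Ψ δ) r = Real.sign r) ∧
    (∀ r : ℝ, |deriv (Ψ δ) r| ≤ CΨ) ∧
    (∀ r : ℝ, |deriv (deriv (Ψ δ)) r| ≤ CΨ / δ)

/-- The quantity `I_δ = ½ ∫_ℝ (Ψ'_δ(r) − sgn r) dr`. -/
noncomputable def Idelta (Ψ : ℝ → ℝ → ℝ) (δ : ℝ) : ℝ :=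
  (1 / 2) * ∫ r : ℝ, (deriv (Ψ δ) r - Real.sign r)

/-- An unperturbed wave `R₀`: a `W^{2,∞}` solution of `M R₀ = A²(sgn ∘ R₀) + μ₀` with
`R₀(0) = 0` which leaves a neighbourhood of `0` monotonically and stays away from `0`. -/
def UnperturbedWave (c : ℝ) (R₀ : ℝ → ℝ) : Prop :=
  IsW2inf R₀ ∧ R₀ 0 = 0 ∧
  (∃ μ₀ : ℝ, ∀ x, Mop c R₀ x = Aop (Aop (fun y => Real.sign (R₀ y))) x + μ₀) ∧
  ∃ x₀ r₀ d₀ : ℝ, 0 < x₀ ∧ 0 < r₀ ∧ 0 < d₀ ∧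
    (∀ x, x₀ < x → r₀ < R₀ x) ∧ (∀ x, x < -x₀ → R₀ x < -r₀) ∧
    (∀ x, |x| < x₀ → d₀ < deriv R₀ x)

/-- `δ`-admissibility of a corrector `S` relative to `R₀`. -/
def Admissible (δ : ℝ) (R₀ S : ℝ → ℝ) : Prop :=
  IsW2inf S ∧ S 0 = 0 ∧
  ∃ xm xp : ℝ, xm < 0 ∧ 0 < xp ∧
    R₀ xm + S xm = -δ ∧ R₀ xp + S xp = δ ∧
    (∀ x, x < xm → R₀ x + S x < -δ) ∧
    (∀ x, xp < x → δ < R₀ x + S x) ∧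
    (∀ x, xm < x → x < xp →
      deriv R₀ 0 / 2 < deriv R₀ x + deriv S x ∧ deriv R₀ x + deriv S x < 2 * deriv R₀ 0)

/-- The nonlinear superposition operator `G(S)(x) = Ψ'_δ(R₀(x)+S(x)) − sgn(R₀(x))`. -/
noncomputable def Gop (Ψ : ℝ → ℝ → ℝ) (δ : ℝ) (R₀ S : ℝ → ℝ) : ℝ → ℝ :=
  fun x => deriv (Ψ δ) (R₀ x + S x) - Real.sign (R₀ x)

/-!
Let `R = R₀ + S`. Both `R₀` and `R` have the sign of `x`, so `G(S) = (Ψ'_δ - sgn) ∘ R` is bounded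
and lives on the interval `[p, q]` where `R` crosses the layer `[-δ, δ]`. Its length is `O(δ)`
because the slope of `R` is bounded below there; this gives the bound on `A G(S)`.

Away from two intervals of length `q - p` around `±1/2`, `A G(S)` is either `0` or `∫ G(S)`, whence
`‖A² G(S)‖_∞ ≤ |∫ G(S)| + O(δ²)`. Finally `∫ G(S) R' = ∫ (Ψ'_δ - sgn) = 2 I_δ = 0` by substitution,
and freezing `R'` at `0` costs only `O((1 + ‖S''‖_∞) δ²)`.
-/

section Averaging

open Set Function

variable {F : ℝ → ℝ} {a b B p q : ℝ}

lemma abs_Aop_le_add_mul_measureReal {T : Set ℝ} (hT : MeasurableSet T) (hT' : volume T ≠ ⊤)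
    (hb : 0 ≤ b) (hF : ∀ s, |F s| ≤ a + b) (hFT : ∀ s ∉ T, |F s| ≤ a) (x : ℝ) :
    |Aop F x| ≤ a + b * volume.real T := by
  have hx : x - 1 / 2 ≤ x + 1 / 2 := by linarith
  have hint : Integrable (T.indicator fun _ => b) :=
    (integrable_indicator_iff hT).2 (integrableOn_const hT')
  have hdom (s : ℝ) : ‖F s‖ ≤ a + T.indicator (fun _ => b) s := by
    by_cases hs : s ∈ T
    · simpa only [Real.norm_eq_abs, indicator_of_mem hs] using hF s
    · simpa only [Real.norm_eq_abs, indicator_of_notMem hs, add_zero] using hFT s hs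
  calc |Aop F x|
      ≤ ∫ s in (x - 1 / 2)..(x + 1 / 2), (a + T.indicator (fun _ => b) s) :=
        intervalIntegral.norm_integral_le_of_norm_le hx (.of_forall fun s _ => hdom s)
          (intervalIntegrable_const.add hint.intervalIntegrable)
    _ = a + ∫ s in Ioc (x - 1 / 2) (x + 1 / 2), T.indicator (fun _ => b) s := by
        rw [intervalIntegral.integral_add intervalIntegrable_const hint.intervalIntegrable,
          intervalIntegral.integral_const, intervalIntegral.integral_of_le hx, smul_eq_mul]
        ring
    _ ≤ a + ∫ s, T.indicator (fun _ => b) s :=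
        add_le_add le_rfl <| setIntegral_le_integral hint <| .of_forall fun s =>
          indicator_nonneg (fun _ _ => hb) s
    _ = a + b * volume.real T := by
        rw [integral_indicator hT, setIntegral_const, smul_eq_mul, mul_comm]

lemma abs_Aop_le_of_support_subset_Icc (hpq : p ≤ q) (hF : support F ⊆ Icc p q)
    (hB : ∀ s, |F s| ≤ B) (x : ℝ) : |Aop F x| ≤ B * (q - p) := by
  have h := abs_Aop_le_add_mul_measureReal (a := 0) (b := B) (T := Icc p q) measurableSet_Icc
    measure_Icc_lt_top.ne ((abs_nonneg _).trans (hB 0)) (by simpa only [zero_add] using hB)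
    (fun s hs => by rw [notMem_support.1 (notMem_subset hF hs), abs_zero]) x
  rwa [Real.volume_real_Icc_of_le hpq, zero_add] at h

lemma abs_Aop_le_abs_integral_of_support_subset_Icc (hF : support F ⊆ Icc p q) {s : ℝ}
    (hs : s ∉ Icc (p - 1 / 2) (q - 1 / 2) ∪ Icc (p + 1 / 2) (q + 1 / 2)) :
    |Aop F s| ≤ |∫ t, F t| := by
  have hzero (h : ∀ t ∈ uIcc (s - 1 / 2) (s + 1 / 2), t ∉ Icc p q) : |Aop F s| ≤ |∫ t, F t| := by
    have hAop : Aop F s = 0 := by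
      rw [Aop, intervalIntegral.integral_congr (g := fun _ => 0)
        fun t ht => notMem_support.1 (notMem_subset hF (h t ht)), intervalIntegral.integral_zero]
    rw [hAop, abs_zero]
    exact abs_nonneg _
  rw [uIcc_of_le (by linarith)] at hzero
  simp only [mem_union, mem_Icc, not_or, not_and_or, not_le] at hs
  rcases hs with ⟨hleft | hleft, hright | hright⟩
  · exact hzero fun t ht htpq => by linarith [ht.2, htpq.1]
  · exact hzero fun t ht htpq => by linarith [ht.2, htpq.1]
  · have hsub : support F ⊆ Ioc (s - 1 / 2) (s + 1 / 2) := fun t ht =>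
      ⟨by linarith [(hF ht).1], by linarith [(hF ht).2]⟩
    rw [Aop, intervalIntegral.integral_eq_integral_of_support_subset hsub]
  · exact hzero fun t ht htpq => by linarith [ht.1, htpq.2]

lemma abs_Aop_Aop_le_of_support_subset_Icc (hpq : p ≤ q) (hF : support F ⊆ Icc p q)
    (hB : ∀ s, |F s| ≤ B) (x : ℝ) :
    |Aop (Aop F) x| ≤ |∫ t, F t| + 2 * B * (q - p) ^ 2 := by
  set T := Icc (p - 1 / 2) (q - 1 / 2) ∪ Icc (p + 1 / 2) (q + 1 / 2)
  have hb : 0 ≤ B * (q - p) := mul_nonneg ((abs_nonneg _).trans (hB 0)) (sub_nonneg.2 hpq)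
  have hT : volume.real T ≤ 2 * (q - p) := by
    refine (measureReal_union_le _ _).trans_eq ?_
    rw [Real.volume_real_Icc_of_le (by linarith), Real.volume_real_Icc_of_le (by linarith)]
    ring
  calc |Aop (Aop F) x|
      ≤ |∫ t, F t| + B * (q - p) * volume.real T :=
        abs_Aop_le_add_mul_measureReal (measurableSet_Icc.union measurableSet_Icc)
          (measure_union_lt_top measure_Icc_lt_top measure_Icc_lt_top).ne hb
          (fun s => (abs_Aop_le_of_support_subset_Icc hpq hF hB s).trans
            (le_add_of_nonneg_left (abs_nonneg _)))
          (fun s hs => abs_Aop_le_abs_integral_of_support_subset_Icc hF hs) x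
    _ ≤ |∫ t, F t| + B * (q - p) * (2 * (q - p)) := by gcongr
    _ = |∫ t, F t| + 2 * B * (q - p) ^ 2 := by ring

end Averaging

section Layer

open Set Function

lemma abs_mul_setIntegral_le_of_setIntegral_mul_eq_zero {u h : ℝ → ℝ} {K : NNReal}
    {B p q x₀ : ℝ} (hpq : p ≤ q) (hu : LipschitzOnWith K u (Icc p q))
    (hh : IntegrableOn h (Icc p q)) (hB : ∀ x ∈ Icc p q, |h x| ≤ B) (hx₀ : x₀ ∈ Icc p q)
    (huh : ∫ x in Icc p q, u x * h x = 0) :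
    |u x₀ * ∫ x in Icc p q, h x| ≤ K * B * (q - p) ^ 2 := by
  have hfreeze : u x₀ * ∫ x in Icc p q, h x = ∫ x in Icc p q, (u x₀ - u x) * h x := by
    simp only [sub_mul]
    rw [integral_sub (hh.const_mul _) (hh.continuousOn_mul hu.continuousOn isCompact_Icc), huh,
      integral_const_mul, sub_zero]
  have hbound (x : ℝ) (hx : x ∈ Icc p q) : ‖(u x₀ - u x) * h x‖ ≤ K * (q - p) * B := by
    rw [norm_mul]
    gcongr
    · calc ‖u x₀ - u x‖ = dist (u x₀) (u x) := (dist_eq_norm _ _).symm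
        _ ≤ K * dist x₀ x := hu.dist_le_mul x₀ hx₀ x hx
        _ ≤ K * (q - p) := by gcongr; exact Real.dist_le_of_mem_Icc hx₀ hx
    · exact hB x hx
  calc |u x₀ * ∫ x in Icc p q, h x| = ‖∫ x in Icc p q, (u x₀ - u x) * h x‖ := by
        rw [hfreeze, Real.norm_eq_abs]
    _ ≤ K * (q - p) * B * volume.real (Icc p q) :=
        norm_setIntegral_le_of_norm_le_const measure_Icc_lt_top hbound
    _ = K * B * (q - p) ^ 2 := by rw [Real.volume_real_Icc_of_le hpq]; ring

lemma sign_apply_eq_sign_of_strictMonoOn {f : ℝ → ℝ} {p q : ℝ} (hp : p < 0) (hq : 0 < q)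
    (h0 : f 0 = 0) (hf : StrictMonoOn f (Icc p q)) (hleft : ∀ x < p, f x < 0)
    (hright : ∀ x > q, 0 < f x) (x : ℝ) : Real.sign (f x) = Real.sign x := by
  have hmem : (0 : ℝ) ∈ Icc p q := ⟨hp.le, hq.le⟩
  rcases lt_trichotomy x 0 with hx | rfl | hx
  · rw [Real.sign_of_neg hx, Real.sign_of_neg]
    rcases lt_or_ge x p with hxp | hxp
    · exact hleft x hxp
    · exact h0 ▸ hf ⟨hxp, hx.le.trans hq.le⟩ hmem hx
  · rw [h0]
  · rw [Real.sign_of_pos hx, Real.sign_of_pos]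
    rcases lt_or_ge q x with hqx | hqx
    · exact hright x hqx
    · exact h0 ▸ hf hmem ⟨hp.le.trans hx.le, hqx⟩ hx

/-- `R` crosses the layer `[-δ, δ]` exactly on the interval `[p, q]`, passing through the origin,
with slope at least `m` inside. This is what admissibility of `S` says about the profile
`R = R₀ + S`. -/
structure CrossesLayer (R : ℝ → ℝ) (δ m p q : ℝ) : Prop where
  differentiable : Differentiable ℝ R
  left_neg : p < 0
  right_pos : 0 < q
  map_zero : R 0 = 0
  map_left : R p = -δ
  map_right : R q = δ
  lt_neg_of_lt : ∀ x < p, R x < -δ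
  lt_of_gt : ∀ x > q, δ < R x
  le_deriv : ∀ x ∈ Ioo p q, m ≤ deriv R x

namespace CrossesLayer

variable {R g : ℝ → ℝ} {δ m p q B : ℝ}

lemma left_le_right (hR : CrossesLayer R δ m p q) : p ≤ q :=
  hR.left_neg.le.trans hR.right_pos.le

lemma sign_apply (hR : CrossesLayer R δ m p q) (hδ : 0 < δ) (hm : 0 < m) (x : ℝ) :
    Real.sign (R x) = Real.sign x := by
  have hmono : StrictMonoOn R (Icc p q) := by
    refine strictMonoOn_of_deriv_pos (convex_Icc p q) hR.differentiable.continuous.continuousOn ?_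
    rw [interior_Icc]
    exact fun y hy => hm.trans_le (hR.le_deriv y hy)
  exact sign_apply_eq_sign_of_strictMonoOn hR.left_neg hR.right_pos hR.map_zero hmono
    (fun y hy => (hR.lt_neg_of_lt y hy).trans (neg_lt_zero.2 hδ))
    (fun y hy => hδ.trans (hR.lt_of_gt y hy)) x

lemma length_le (hR : CrossesLayer R δ m p q) (hm : 0 < m) : q - p ≤ 2 * δ / m := by
  have hmv : m * (q - p) ≤ R q - R p := by
    refine (convex_Icc p q).mul_sub_le_image_sub_of_le_deriv
      hR.differentiable.continuous.continuousOn hR.differentiable.differentiableOn ?_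
      p (left_mem_Icc.2 hR.left_le_right) q (right_mem_Icc.2 hR.left_le_right) hR.left_le_right
    rw [interior_Icc]
    exact hR.le_deriv
  rw [le_div_iff₀ hm]
  linarith [hR.map_left, hR.map_right]

lemma support_comp_subset (hR : CrossesLayer R δ m p q) (hgδ : ∀ r, δ ≤ |r| → g r = 0) :
    support (g ∘ R) ⊆ Icc p q := by
  intro x hx
  by_contra hxpq
  apply hx
  apply hgδ
  rw [le_abs]
  rcases lt_or_ge x p with hxp | hpx
  · exact .inr (by linarith [hR.lt_neg_of_lt x hxp])
  · exact .inl (hR.lt_of_gt x (lt_of_not_ge fun hxq => hxpq ⟨hpx, hxq⟩)).le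

lemma setIntegral_deriv_mul_comp (hR : CrossesLayer R δ m p q) (hm : 0 ≤ m)
    (hgδ : ∀ r, δ ≤ |r| → g r = 0) : ∫ x in Icc p q, deriv R x * g (R x) = ∫ r, g r := by
  calc ∫ x in Icc p q, deriv R x * g (R x) = ∫ r in Icc (R p) (R q), g r :=
        integral_Icc_deriv_smul_of_deriv_nonneg hR.differentiable.continuous.continuousOn
          (fun x _ => (hR.differentiable x).hasDerivAt)
          (fun x hx => hm.trans (hR.le_deriv x hx)) hR.left_le_right
    _ = ∫ r, g r := by
        rw [hR.map_left, hR.map_right]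
        refine setIntegral_eq_integral_of_forall_compl_eq_zero fun r hr => hgδ r ?_
        exact (not_le.1 fun h => hr (abs_le.1 h)).le

lemma abs_integral_comp_le (hR : CrossesLayer R δ m p q) (hm : 0 < m) {K : NNReal}
    (hK : LipschitzOnWith K (deriv R) (Icc p q)) (hg : Measurable g) (hgB : ∀ r, |g r| ≤ B)
    (hgδ : ∀ r, δ ≤ |r| → g r = 0) (hg0 : ∫ r, g r = 0) :
    |∫ x, g (R x)| ≤ K * B * (q - p) ^ 2 / m := by
  have hsupp : ∫ x in Icc p q, g (R x) = ∫ x, g (R x) :=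
    setIntegral_eq_integral_of_forall_compl_eq_zero fun x hx =>
      of_not_not fun hgx => hx (hR.support_comp_subset hgδ hgx)
  have hint : IntegrableOn (fun x => g (R x)) (Icc p q) :=
    Measure.integrableOn_of_bounded measure_Icc_lt_top.ne
      (hg.comp hR.differentiable.continuous.measurable).aestronglyMeasurable
      (.of_forall fun x => hgB (R x))
  have hfrozen := abs_mul_setIntegral_le_of_setIntegral_mul_eq_zero hR.left_le_right hK hint
    (fun x _ => hgB (R x)) ⟨hR.left_neg.le, hR.right_pos.le⟩
    ((hR.setIntegral_deriv_mul_comp hm.le hgδ).trans hg0)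
  have hslope : m ≤ |deriv R 0| :=
    (hR.le_deriv 0 ⟨hR.left_neg, hR.right_pos⟩).trans (le_abs_self _)
  rw [le_div_iff₀ hm, mul_comm]
  calc m * |∫ x, g (R x)| ≤ |deriv R 0| * |∫ x, g (R x)| := by gcongr
    _ ≤ K * B * (q - p) ^ 2 := by rwa [← abs_mul, ← hsupp]

lemma abs_Aop_comp_le (hR : CrossesLayer R δ m p q) (hm : 0 < m) (hgB : ∀ r, |g r| ≤ B)
    (hgδ : ∀ r, δ ≤ |r| → g r = 0) (x : ℝ) : |Aop (g ∘ R) x| ≤ 2 * B / m * δ := by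
  have hB : 0 ≤ B := (abs_nonneg _).trans (hgB 0)
  calc |Aop (g ∘ R) x| ≤ B * (q - p) :=
        abs_Aop_le_of_support_subset_Icc hR.left_le_right (hR.support_comp_subset hgδ)
          (fun s => hgB (R s)) x
    _ ≤ B * (2 * δ / m) := by gcongr; exact hR.length_le hm
    _ = 2 * B / m * δ := by ring

lemma abs_Aop_Aop_comp_le (hR : CrossesLayer R δ m p q) (hm : 0 < m) {K : NNReal}
    (hK : LipschitzOnWith K (deriv R) (Icc p q)) (hg : Measurable g) (hgB : ∀ r, |g r| ≤ B)
    (hgδ : ∀ r, δ ≤ |r| → g r = 0) (hg0 : ∫ r, g r = 0) (x : ℝ) :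
    |Aop (Aop (g ∘ R)) x| ≤ 4 * B / m ^ 2 * (K / m + 2) * δ ^ 2 := by
  have hB : 0 ≤ B := (abs_nonneg _).trans (hgB 0)
  have hlen : 0 ≤ q - p := sub_nonneg.2 hR.left_le_right
  calc |Aop (Aop (g ∘ R)) x| ≤ |∫ t, g (R t)| + 2 * B * (q - p) ^ 2 :=
        abs_Aop_Aop_le_of_support_subset_Icc hR.left_le_right (hR.support_comp_subset hgδ)
          (fun s => hgB (R s)) x
    _ ≤ K * B * (q - p) ^ 2 / m + 2 * B * (q - p) ^ 2 := by
        gcongr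
        exact hR.abs_integral_comp_le hm hK hg hgB hgδ hg0
    _ = B * (K / m + 2) * (q - p) ^ 2 := by ring
    _ ≤ B * (K / m + 2) * (2 * δ / m) ^ 2 := by gcongr; exact hR.length_le hm
    _ = 4 * B / m ^ 2 * (K / m + 2) * δ ^ 2 := by ring

end CrossesLayer

end Layer

lemma lipschitzWith_deriv_add {f g : ℝ → ℝ} {K L : NNReal} (hf : Differentiable ℝ f)
    (hg : Differentiable ℝ g) (hK : LipschitzWith K (deriv f)) (hL : LipschitzWith L (deriv g)) :
    LipschitzWith (K + L) (deriv (f + g)) := by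
  rw [show deriv (f + g) = deriv f + deriv g from funext fun x => deriv_add (hf x) (hg x)]
  exact hK.add hL

/-- The pointwise error `ψ' - sgn` of a force `ψ'` that approximates the sign; `Idelta` is half its
integral. -/
noncomputable def signDefect (ψ : ℝ → ℝ) (r : ℝ) : ℝ := deriv ψ r - Real.sign r

lemma measurable_real_sign : Measurable Real.sign :=
  .ite measurableSet_Iio measurable_const (.ite measurableSet_Ioi measurable_const measurable_const)

lemma abs_real_sign_le_one (r : ℝ) : |Real.sign r| ≤ 1 := by
  rcases Real.sign_apply_eq r with h | h | h <;> norm_num [h]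

lemma measurable_signDefect (ψ : ℝ → ℝ) : Measurable (signDefect ψ) :=
  (measurable_deriv ψ).sub measurable_real_sign

lemma abs_signDefect_le {ψ : ℝ → ℝ} {L : NNReal} (hψ : LipschitzWith L ψ) (r : ℝ) :
    |signDefect ψ r| ≤ L + 1 :=
  (abs_sub _ _).trans (add_le_add (norm_deriv_le_of_lipschitz hψ) (abs_real_sign_le_one r))

lemma integral_signDefect_eq_zero {Ψ : ℝ → ℝ → ℝ} {δ : ℝ} (hI : Idelta Ψ δ = 0) :
    ∫ r, signDefect (Ψ δ) r = 0 :=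
  (mul_eq_zero.1 hI).resolve_left one_half_pos.ne'

lemma Gop_eq_signDefect_comp {Ψ : ℝ → ℝ → ℝ} {δ : ℝ} {R₀ S : ℝ → ℝ}
    (hsign : ∀ x, Real.sign (R₀ x + S x) = Real.sign (R₀ x)) :
    Gop Ψ δ R₀ S = signDefect (Ψ δ) ∘ (R₀ + S) := by
  ext x
  simp only [Gop, signDefect, Function.comp_apply, Pi.add_apply, hsign]

lemma Admissible.exists_crossesLayer {δ : ℝ} {R₀ S : ℝ → ℝ} (hS : Admissible δ R₀ S)
    (hR₀ : Differentiable ℝ R₀) (h0 : R₀ 0 = 0) :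
    ∃ p q, CrossesLayer (R₀ + S) δ (deriv R₀ 0 / 2) p q := by
  obtain ⟨⟨hSdiff, -, -⟩, hS0, p, q, hp, hq, hRp, hRq, hlt, hgt, hslope⟩ := hS
  refine ⟨p, q, hR₀.add hSdiff, hp, hq, by simp only [Pi.add_apply, h0, hS0, add_zero], hRp, hRq,
    hlt, hgt, fun x hx => ?_⟩
  rw [deriv_add (hR₀ x) (hSdiff x)]
  exact (hslope x hx.1 hx.2).1.le

lemma AssumptionA.lipschitzWith {Ψ : ℝ → ℝ → ℝ} {CΨ δ : ℝ} (hA : AssumptionA Ψ CΨ) (hδ : 0 < δ) :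
    LipschitzWith CΨ.toNNReal (Ψ δ) := by
  obtain ⟨-, hsmooth, -, hbound, -⟩ := hA.2 δ hδ
  exact lipschitzWith_of_nnnorm_deriv_le (hsmooth.differentiable two_ne_zero) fun r =>
    NNReal.le_toNNReal_of_coe_le (hbound r)

lemma AssumptionA.deriv_eq_sign {Ψ : ℝ → ℝ → ℝ} {CΨ δ r : ℝ} (hA : AssumptionA Ψ CΨ)
    (hδ : 0 < δ) (hr : δ ≤ |r|) : deriv (Ψ δ) r = Real.sign r :=
  (hA.2 δ hδ).2.2.1 r hr

lemma UnperturbedWave.deriv_zero_pos {c : ℝ} {R₀ : ℝ → ℝ} (hR₀ : UnperturbedWave c R₀) :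
    0 < deriv R₀ 0 := by
  obtain ⟨-, -, -, x₀, -, d₀, hx₀, -, hd₀, -, -, hslope⟩ := hR₀
  exact hd₀.trans (hslope 0 (by rwa [abs_zero]))

lemma UnperturbedWave.sign_apply {c : ℝ} {R₀ : ℝ → ℝ} (hR₀ : UnperturbedWave c R₀) (x : ℝ) :
    Real.sign (R₀ x) = Real.sign x := by
  obtain ⟨⟨hdiff, -, -⟩, h0, -, x₀, r₀, d₀, hx₀, hr₀, hd₀, hright, hleft, hslope⟩ := hR₀
  have hmono : StrictMonoOn R₀ (Set.Icc (-x₀) x₀) := by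
    refine strictMonoOn_of_deriv_pos (convex_Icc _ _) hdiff.continuous.continuousOn ?_
    rw [interior_Icc]
    exact fun y hy => hd₀.trans (hslope y (abs_lt.2 hy))
  exact sign_apply_eq_sign_of_strictMonoOn (neg_lt_zero.2 hx₀) hx₀ h0 hmono
    (fun y hy => (hleft y hy).trans (neg_lt_zero.2 hr₀)) (fun y hy => hr₀.trans (hright y hy)) x

theorem stmt10_general {Ψ : ℝ → ℝ → ℝ} {L K₀ : NNReal} {R₀ : ℝ → ℝ}
    (hL : ∀ δ, 0 < δ → LipschitzWith L (Ψ δ))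
    (hΨ : ∀ δ, 0 < δ → ∀ r, δ ≤ |r| → deriv (Ψ δ) r = Real.sign r)
    (hI : ∀ δ, 0 < δ → Idelta Ψ δ = 0)
    (hR₀ : Differentiable ℝ R₀) (hK₀ : LipschitzWith K₀ (deriv R₀))
    (hsign : ∀ x, Real.sign (R₀ x) = Real.sign x) (hslope : 0 < deriv R₀ 0) :
    ∃ CG : ℝ, 0 < CG ∧ ∀ δ, 0 < δ → ∀ S : ℝ → ℝ, Admissible δ R₀ S →
      (∀ x, |Aop (Gop Ψ δ R₀ S) x| ≤ CG * δ) ∧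
      (∀ K : NNReal, LipschitzWith K (deriv S) →
        ∀ x, |Aop (Aop (Gop Ψ δ R₀ S)) x| ≤ CG * (1 + (K : ℝ)) * δ ^ 2) := by
  set m := deriv R₀ 0 / 2
  have hm : 0 < m := half_pos hslope
  have h0 : R₀ 0 = 0 := Real.sign_eq_zero_iff.1 ((hsign 0).trans Real.sign_zero)
  set C₁ : ℝ := 2 * (L + 1) / m
  set C₂ : ℝ := 4 * (L + 1) / m ^ 2
  have hC₁ : 0 < C₁ := by positivity
  have hC₂ : 0 < C₂ := by positivity
  refine ⟨C₁ + C₂ * ((1 + K₀) / m + 2), add_pos hC₁ (mul_pos hC₂ (by positivity)),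
    fun δ hδ S hS => ?_⟩
  obtain ⟨p, q, hR⟩ := hS.exists_crossesLayer hR₀ h0
  have hdefect (r : ℝ) (hr : δ ≤ |r|) : signDefect (Ψ δ) r = 0 := sub_eq_zero.2 (hΨ δ hδ r hr)
  have hG : Gop Ψ δ R₀ S = signDefect (Ψ δ) ∘ (R₀ + S) :=
    Gop_eq_signDefect_comp fun x => (hR.sign_apply hδ hm x).trans (hsign x).symm
  rw [hG]
  refine ⟨fun x => ?_, fun K hK x => ?_⟩
  · refine (hR.abs_Aop_comp_le hm (abs_signDefect_le (hL δ hδ)) hdefect x).trans ?_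
    gcongr
    exact le_add_of_nonneg_right (by positivity)
  · have hlip := lipschitzWith_deriv_add hR₀ hS.1.1 hK₀ hK
    have hconst : ((K₀ + K : NNReal) : ℝ) / m + 2 ≤ ((1 + K₀) / m + 2) * (1 + K) := by
      have hdiff : 0 ≤ 1 / m + (K₀ / m + 2) * K := by positivity
      linear_combination hdiff + NNReal.coe_add K₀ K / m
    calc |Aop (Aop (signDefect (Ψ δ) ∘ (R₀ + S))) x|
        ≤ C₂ * ((K₀ + K : NNReal) / m + 2) * δ ^ 2 :=
          hR.abs_Aop_Aop_comp_le hm hlip.lipschitzOnWith (measurable_signDefect _)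
            (abs_signDefect_le (hL δ hδ)) hdefect (integral_signDefect_eq_zero (hI δ hδ)) x
      _ ≤ C₂ * (((1 + K₀) / m + 2) * (1 + K)) * δ ^ 2 := by gcongr
      _ ≤ (C₁ + C₂ * ((1 + K₀) / m + 2)) * (1 + K) * δ ^ 2 := by
          rw [← mul_assoc]
          gcongr
          exact le_add_of_nonneg_left hC₁.le

/-- for `δ`-admissible `S`, `‖A G(S)‖_∞ ≤ C_G δ` and
`‖A² G(S)‖_∞ ≤ C_G (1 + ‖S''‖_∞) δ²`. -/
theorem stmt10 (c : ℝ) (hc0 : 0 < c) (hc1 : c < 1)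
    (Ψ : ℝ → ℝ → ℝ) (CΨ : ℝ) (hA : AssumptionA Ψ CΨ)
    (hI : ∀ δ : ℝ, 0 < δ → Idelta Ψ δ = 0)
    (R₀ : ℝ → ℝ) (hR₀ : UnperturbedWave c R₀) :
    ∃ CG δs : ℝ, 0 < CG ∧ 0 < δs ∧
      ∀ δ : ℝ, 0 < δ → δ < δs → ∀ S : ℝ → ℝ, Admissible δ R₀ S →
        (∀ x, |Aop (Gop Ψ δ R₀ S) x| ≤ CG * δ) ∧
        (∀ K : NNReal, LipschitzWith K (deriv S) →
          ∀ x, |Aop (Aop (Gop Ψ δ R₀ S)) x| ≤ CG * (1 + (K : ℝ)) * δ ^ 2) := by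
  obtain ⟨hdiff, -, K₀, hK₀⟩ := hR₀.1
  obtain ⟨CG, hCG, hG⟩ := stmt10_general (fun _ => hA.lipschitzWith)
    (fun _ hδ _ => hA.deriv_eq_sign hδ) hI hdiff hK₀ hR₀.sign_apply hR₀.deriv_zero_pos
  exact ⟨CG, 1, hCG, one_pos, fun δ hδ _ => hG δ hδ⟩
end

section
/- Let c ∈ (0,1) and let R₀ be an unperturbed wave. Then for any constants C₀, C₁ > 0 there exists δ₀ > 0 such that for every 0 < δ < δ₀, every S ∈ W^{2,∞}(ℝ) with S(0) = 0, ‖S‖_∞ ≤ C₀δ², and ‖S'‖_∞ ≤ C₁δ is δ-admissible relative to R₀. -/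
open MeasureTheory Real Filter Topology

/-! Uniformly in `S`, `R₀ + S` has slope close to `R₀'(0)` on a fixed interval `[-η, η]`, by
continuity of `R₀'` at `0` and smallness of `S'`. Outside `[-η, η]`, `R₀` keeps a fixed distance
from `0`, which a small `S` and a small threshold `δ` do not use up. Hence each of the levels `±δ`
is crossed exactly once, inside `(-η, η)`. -/

section Order

variable {α β : Type*} [LinearOrder α] [LinearOrder β] {f : α → β} {a b η : α}

lemma exists_lowerBound_gt_of_strictMonoOn {r : β} (hf : StrictMonoOn f (Set.Icc a b)) (hab : a < b)
    (hfar : ∀ x, b < x → r ≤ f x) (hr : f a < r) (hη : a < η) :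
    ∃ m, f a < m ∧ ∀ x, η ≤ x → m ≤ f x := by
  have hmin : a < min η b := lt_min hη hab
  have hmem : min η b ∈ Set.Icc a b := ⟨hmin.le, min_le_right η b⟩
  refine ⟨min r (f (min η b)), lt_min hr (hf (Set.left_mem_Icc.2 hab.le) hmem hmin), ?_⟩
  intro x hx
  rcases le_or_gt x b with hxb | hbx
  · exact min_le_of_right_le
      (hf.monotoneOn hmem ⟨(hη.trans_le hx).le, hxb⟩ (min_le_of_left_le hx))
  · exact min_le_of_left_le (hfar x hbx)

lemma exists_upperBound_lt_of_strictMonoOn {r : β} (hf : StrictMonoOn f (Set.Icc a b)) (hab : a < b)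
    (hfar : ∀ x, x < a → f x ≤ r) (hr : r < f b) (hη : η < b) :
    ∃ m, m < f b ∧ ∀ x, x ≤ η → f x ≤ m :=
  exists_lowerBound_gt_of_strictMonoOn (α := αᵒᵈ) (β := βᵒᵈ) (f := f)
    (fun _ hx _ hy hxy ↦ hf hy.symm hx.symm hxy) hab hfar hr hη

end Order

lemma exists_crossing {α β : Type*} [ConditionallyCompleteLinearOrder α] [TopologicalSpace α]
    [OrderTopology α] [DenselyOrdered α] [LinearOrder β] [TopologicalSpace β]
    [OrderClosedTopology β] {f : α → β} {a b : α} {y : β}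
    (hcont : ContinuousOn f (Set.Icc a b)) (hmono : StrictMonoOn f (Set.Icc a b))
    (hlow : ∀ x, x ≤ a → f x < y) (hhigh : ∀ x, b ≤ x → y < f x) :
    ∃ t ∈ Set.Ioo a b, f t = y ∧ (∀ x, f x < y ↔ x < t) ∧ ∀ x, y < f x ↔ t < x := by
  have hab : a ≤ b := le_of_not_gt fun hba ↦ (hlow a le_rfl).not_gt (hhigh a hba.le)
  obtain ⟨t, ht, rfl⟩ := intermediate_value_Ioo hab hcont ⟨hlow a le_rfl, hhigh b le_rfl⟩
  have ht' : t ∈ Set.Icc a b := Set.Ioo_subset_Icc_self ht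
  have lt_of_lt : ∀ x, x < t → f x < f t := fun x hxt ↦ by
    rcases le_or_gt x a with hxa | hax
    · exact hlow x hxa
    · exact hmono ⟨hax.le, hxt.le.trans ht'.2⟩ ht' hxt
  have gt_of_gt : ∀ x, t < x → f t < f x := fun x htx ↦ by
    rcases le_or_gt b x with hbx | hxb
    · exact hhigh x hbx
    · exact hmono ht' ⟨ht'.1.trans htx.le, hxb.le⟩ htx
  refine ⟨t, ht, rfl, fun x ↦ ⟨fun hfx ↦ ?_, lt_of_lt x⟩, fun x ↦ ⟨fun hfx ↦ ?_, gt_of_gt x⟩⟩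
  · by_contra! htx
    rcases htx.eq_or_lt with rfl | htx
    exacts [hfx.false, hfx.not_gt (gt_of_gt x htx)]
  · by_contra! hxt
    rcases hxt.eq_or_lt with rfl | hxt
    exacts [hfx.false, hfx.not_gt (lt_of_lt x hxt)]

/-- A transition profile: a differentiable function which vanishes at `0`, whose derivative is
positive and continuous there, and which is bounded away from `0` with the sign of its argument
outside every neighbourhood of the origin. Small perturbations of such a profile are
`δ`-admissible. -/
structure IsTransitionProfile (R : ℝ → ℝ) : Prop where
  differentiable : Differentiable ℝ R
  apply_zero : R 0 = 0
  deriv_zero_pos : 0 < deriv R 0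
  continuousAt_deriv : ContinuousAt (deriv R) 0
  exists_pos_forall_ge : ∀ η, 0 < η → ∃ m, 0 < m ∧ ∀ x, η ≤ x → m ≤ R x
  exists_neg_forall_le : ∀ η, η < 0 → ∃ m, m < 0 ∧ ∀ x, x ≤ η → R x ≤ m

lemma UnperturbedWave.isTransitionProfile {c : ℝ} {R₀ : ℝ → ℝ} (h : UnperturbedWave c R₀) :
    IsTransitionProfile R₀ := by
  obtain ⟨⟨hdiff, -, K, hLip⟩, hzero, -, x₀, r₀, d₀, hx₀, hr₀, hd₀, hright, hleft, hderiv⟩ := h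
  have hmono : StrictMonoOn R₀ (Set.Icc (-x₀) x₀) := by
    refine strictMonoOn_of_deriv_pos (convex_Icc _ _) hdiff.continuous.continuousOn fun x hx ↦ ?_
    rw [interior_Icc] at hx
    exact hd₀.trans (hderiv x (abs_lt.2 hx))
  refine ⟨hdiff, hzero, hd₀.trans (hderiv 0 (by simpa only [abs_zero] using hx₀)),
    hLip.continuous.continuousAt, fun η hη ↦ ?_, fun η hη ↦ ?_⟩
  · have hmono_right := hmono.mono (Set.Icc_subset_Icc_left (neg_nonpos.2 hx₀.le))
    simpa only [hzero] using exists_lowerBound_gt_of_strictMonoOn hmono_right hx₀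
      (fun x hx ↦ (hright x hx).le) (hzero.trans_lt hr₀) hη
  · have hmono_left := hmono.mono (Set.Icc_subset_Icc_right hx₀.le)
    simpa only [hzero] using exists_upperBound_lt_of_strictMonoOn hmono_left (neg_neg_of_pos hx₀)
      (fun x hx ↦ (hleft x hx).le) ((neg_neg_of_pos hr₀).trans_eq hzero.symm) hη

lemma admissible_of_slope_near_of_far {R S : ℝ → ℝ} {δ η : ℝ} (hR : Differentiable ℝ R)
    (hR_zero : R 0 = 0) (hR_deriv : 0 < deriv R 0) (hS : IsW2inf S) (hS_zero : S 0 = 0)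
    (hδ : 0 < δ)
    (hslope : ∀ x ∈ Set.Ioo (-η) η,
      deriv R 0 / 2 < deriv R x + deriv S x ∧ deriv R x + deriv S x < 2 * deriv R 0)
    (hleft : ∀ x, x ≤ -η → R x + S x < -δ) (hright : ∀ x, η ≤ x → δ < R x + S x) :
    Admissible δ R S := by
  have hcont : ContinuousOn (fun x ↦ R x + S x) (Set.Icc (-η) η) :=
    (hR.continuous.add hS.1.continuous).continuousOn
  have hmono : StrictMonoOn (fun x ↦ R x + S x) (Set.Icc (-η) η) := by
    refine strictMonoOn_of_deriv_pos (convex_Icc _ _) hcont fun x hx ↦ ?_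
    rw [interior_Icc] at hx
    rw [deriv_fun_add (hR x) (hS.1 x)]
    exact (half_pos hR_deriv).trans (hslope x hx).1
  have hzero : R 0 + S 0 = 0 := by rw [hR_zero, hS_zero, add_zero]
  have hneg : -δ < δ := neg_lt_self hδ
  obtain ⟨xm, hxm, hxm_eq, hxm_lt, hxm_gt⟩ :=
    exists_crossing hcont hmono hleft fun x hx ↦ hneg.trans (hright x hx)
  obtain ⟨xp, hxp, hxp_eq, hxp_lt, hxp_gt⟩ :=
    exists_crossing hcont hmono (fun x hx ↦ (hleft x hx).trans hneg) hright
  have hxm_neg : xm < 0 := (hxm_gt 0).1 ((neg_neg_of_pos hδ).trans_eq hzero.symm)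
  have hxp_pos : 0 < xp := (hxp_lt 0).1 (hzero.trans_lt hδ)
  exact ⟨hS, hS_zero, xm, xp, hxm_neg, hxp_pos, hxm_eq, hxp_eq,
    fun x ↦ (hxm_lt x).2, fun x ↦ (hxp_gt x).2,
    fun x hmx hxp' ↦ hslope x ⟨hxm.1.trans hmx, hxp'.trans hxp.2⟩⟩

namespace IsTransitionProfile

variable {R : ℝ → ℝ}

lemma exists_forall_abs_deriv_sub_lt (hR : IsTransitionProfile R) :
    ∃ η, 0 < η ∧ ∀ x, |x| < η → |deriv R x - deriv R 0| < deriv R 0 / 4 := by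
  simpa only [Real.dist_eq, sub_zero] using
    Metric.continuousAt_iff.1 hR.continuousAt_deriv (deriv R 0 / 4)
      (div_pos hR.deriv_zero_pos four_pos)

theorem exists_forall_admissible (hR : IsTransitionProfile R) :
    ∃ ε, 0 < ε ∧ ∀ δ, 0 < δ → δ < ε → ∀ S, IsW2inf S → S 0 = 0 →
      (∀ x, |S x| ≤ ε) → (∀ x, |deriv S x| ≤ ε) → Admissible δ R S := by
  have hderiv_pos := hR.deriv_zero_pos
  obtain ⟨η, hη, hnear⟩ := hR.exists_forall_abs_deriv_sub_lt
  obtain ⟨mp, hmp, hright⟩ := hR.exists_pos_forall_ge η hη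
  obtain ⟨mm, hmm, hleft⟩ := hR.exists_neg_forall_le (-η) (neg_neg_of_pos hη)
  obtain ⟨ε, hε, hεm⟩ := exists_between (show 0 < min (deriv R 0 / 4) (min (mp / 2) (-mm / 2)) from
    lt_min (by linarith) (lt_min (by linarith) (by linarith)))
  obtain ⟨hε_deriv, hε_right, hε_left⟩ :
      ε < deriv R 0 / 4 ∧ ε < mp / 2 ∧ ε < -mm / 2 := by
    simpa only [lt_min_iff] using hεm
  refine ⟨ε, hε, fun δ hδ hδε S hS hS_zero hS_le hS_deriv_le ↦ ?_⟩
  refine admissible_of_slope_near_of_far hR.differentiable hR.apply_zero hderiv_pos hS hS_zero hδ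
    (η := η) (fun x hx ↦ ?_) (fun x hx ↦ ?_) (fun x hx ↦ ?_)
  · have hR_bounds := abs_lt.1 (hnear x (abs_lt.2 hx))
    have hS_bounds := abs_le.1 (hS_deriv_le x)
    constructor <;> linarith
  · linarith [hleft x hx, (abs_le.1 (hS_le x)).2]
  · linarith [hright x hx, (abs_le.1 (hS_le x)).1]

end IsTransitionProfile

theorem stmt12_general {R : ℝ → ℝ} (hR : IsTransitionProfile R) {ω₀ ω₁ : ℝ → ℝ}
    (hω₀ : Tendsto ω₀ (𝓝[>] 0) (𝓝 0)) (hω₁ : Tendsto ω₁ (𝓝[>] 0) (𝓝 0)) :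
    ∃ δ₀ : ℝ, 0 < δ₀ ∧
      ∀ δ : ℝ, 0 < δ → δ < δ₀ →
        ∀ S : ℝ → ℝ, IsW2inf S → S 0 = 0 →
          (∀ x, |S x| ≤ ω₀ δ) → (∀ x, |deriv S x| ≤ ω₁ δ) →
          Admissible δ R S := by
  obtain ⟨ε, hε, hadm⟩ := hR.exists_forall_admissible
  have hsmall : ∀ᶠ δ in 𝓝[>] (0 : ℝ), ω₀ δ < ε ∧ ω₁ δ < ε ∧ δ < ε :=
    (hω₀.eventually_lt_const hε).and
      ((hω₁.eventually_lt_const hε).and (nhdsWithin_le_nhds (Iio_mem_nhds hε)))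
  obtain ⟨δ₀, hδ₀, hsub⟩ := mem_nhdsGT_iff_exists_Ioo_subset.1 hsmall
  refine ⟨δ₀, hδ₀, fun δ hδ hδδ₀ S hS hS_zero hS_le hS_deriv_le ↦ ?_⟩
  obtain ⟨hω₀_lt, hω₁_lt, hδε⟩ := hsub ⟨hδ, hδδ₀⟩
  exact hadm δ hδ hδε S hS hS_zero (fun x ↦ (hS_le x).trans hω₀_lt.le)
    (fun x ↦ (hS_deriv_le x).trans hω₁_lt.le)

lemma tendsto_const_mul_pow_nhdsGT_zero (C : ℝ) {n : ℕ} (hn : n ≠ 0) :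
    Tendsto (fun δ : ℝ ↦ C * δ ^ n) (𝓝[>] 0) (𝓝 0) := by
  have hcont : Continuous fun δ : ℝ ↦ C * δ ^ n := by fun_prop
  simpa only [zero_pow hn, mul_zero] using (hcont.tendsto 0).mono_left nhdsWithin_le_nhds

/-- every small ball in `W^{2,∞}` (smallness `‖S‖_∞ ≤ C₀δ²`,
`‖S'‖_∞ ≤ C₁δ`) consists of `δ`-admissible functions, for `δ` small enough. -/
theorem stmt12 (c : ℝ) (hc0 : 0 < c) (hc1 : c < 1)
    (R₀ : ℝ → ℝ) (hR₀ : UnperturbedWave c R₀)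
    (C₀ C₁ : ℝ) (hC₀ : 0 < C₀) (hC₁ : 0 < C₁) :
    ∃ δ₀ : ℝ, 0 < δ₀ ∧
      ∀ δ : ℝ, 0 < δ → δ < δ₀ →
        ∀ S : ℝ → ℝ, IsW2inf S → S 0 = 0 →
          (∀ x, |S x| ≤ C₀ * δ ^ 2) → (∀ x, |deriv S x| ≤ C₁ * δ) →
          Admissible δ R₀ S :=
  stmt12_general hR₀.isTransitionProfile (tendsto_const_mul_pow_nhdsGT_zero C₀ two_ne_zero)
    (by simpa only [pow_one] using tendsto_const_mul_pow_nhdsGT_zero C₁ one_ne_zero)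
end
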